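/- Let F be a forest on the vertex set [n+1] with l edges, let R be any S-reduction tree with root F, and let f_{F,l} be the number of leaves of R whose label has exactly l edges. Then #(tP(F) ∩ ℤ^{n+1}) / t^l tends to f_{F,l} / l! as the positive integer t tends to infinity; i.e., the normalized l-dimensional volume of P(F) is f_{F,l} · (1/l!). -/

import Mathlib

open scoped BigOperators

namespace RPaper

abbrev Vtype (n : ℕ) := Fin (n+1) → ℝ

abbrev Edge (n : ℕ) := Fin (n+1) × Fin (n+1)

abbrev EdgeSet (n : ℕ) := Finset (Edge n)

/-- The vector `e_i - e_j`. -/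
def ev {n : ℕ} (i j : Fin (n+1)) : Vtype n := Pi.single i 1 - Pi.single j 1

/-- Edges are stored as pairs `(i,j)` with `i < j`. -/
def IsGraph {n : ℕ} (E : EdgeSet n) : Prop := ∀ e ∈ E, e.1 < e.2

/-- The simple graph underlying an edge set. -/
def toSG {n : ℕ} (E : EdgeSet n) : SimpleGraph (Fin (n+1)) :=
  SimpleGraph.fromRel (fun a b => (a, b) ∈ E)

def Acyclic {n : ℕ} (E : EdgeSet n) : Prop := (toSG E).IsAcyclic

def IsForest {n : ℕ} (E : EdgeSet n) : Prop := IsGraph E ∧ Acyclic E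

/-- A tree on the full vertex set `[n+1]`: connected and acyclic. -/
def IsTreeG {n : ℕ} (E : EdgeSet n) : Prop := IsGraph E ∧ (toSG E).IsTree

def Noncrossing {n : ℕ} (E : EdgeSet n) : Prop :=
  ¬ ∃ i j k l : Fin (n+1), i < j ∧ j < k ∧ k < l ∧ (i, k) ∈ E ∧ (j, l) ∈ E

def Alternating {n : ℕ} (E : EdgeSet n) : Prop :=
  ¬ ∃ i j k : Fin (n+1), i < j ∧ j < k ∧ (i, j) ∈ E ∧ (j, k) ∈ E

/-- The positive roots `e_i - e_j`, `i < j`. -/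
def PhiPlus (n : ℕ) : Set (Vtype n) := {v | ∃ i j : Fin (n+1), i < j ∧ v = ev i j}

/-- The cone of nonnegative combinations of the vectors of `E`. -/
def cone {n : ℕ} (E : EdgeSet n) : Set (Vtype n) :=
  {x | ∃ c : Edge n → ℝ, (∀ e, 0 ≤ c e) ∧ x = ∑ e ∈ E, c e • ev e.1 e.2}

def Vbar {n : ℕ} (E : EdgeSet n) : Set (Vtype n) := PhiPlus n ∩ cone E

/-- The root polytope of a graph. -/
def RootPoly {n : ℕ} (E : EdgeSet n) : Set (Vtype n) := convexHull ℝ ({0} ∪ Vbar E)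

/-- The full root polytope `P(A_n^+)`. -/
def FullRootPoly (n : ℕ) : Set (Vtype n) := convexHull ℝ ({0} ∪ PhiPlus n)

/-- Transitive closure: `(i,j)`, `i<j`, whenever there is an increasing path in `E`. -/
def closureT {n : ℕ} (E : EdgeSet n) : Set (Edge n) :=
  {p | p.1 < p.2 ∧ Relation.TransGen (fun a b => a < b ∧ (a, b) ∈ E) p.1 p.2}

/-- Noncrossing alternating spanning trees of the transitive closure of `E`. -/
def NCASpanningTrees {n : ℕ} (E : EdgeSet n) : Set (EdgeSet n) :=
  {F | IsTreeG F ∧ Noncrossing F ∧ Alternating F ∧ ↑F ⊆ closureT E}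

/-- The `t`-th dilate of a set. -/
def dilate {n : ℕ} (t : ℕ) (P : Set (Vtype n)) : Set (Vtype n) := (fun x => (t : ℝ) • x) '' P

/-- Number of lattice points of the `t`-th dilate. -/
noncomputable def latticeCount {n : ℕ} (P : Set (Vtype n)) (t : ℕ) : ℕ :=
  Set.ncard {x ∈ dilate t P | ∀ i, ∃ z : ℤ, x i = (z : ℝ)}

/-- Dimension of the affine span of a set. -/
noncomputable def polyDim {n : ℕ} (P : Set (Vtype n)) : ℕ :=
  Module.finrank ℝ (affineSpan ℝ P).direction

/-- The points `0` and `e_i - e_j`, `(i,j) ∈ F`. -/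
def vertSet {n : ℕ} (F : EdgeSet n) : Set (Vtype n) :=
  {0} ∪ {v | ∃ e ∈ F, v = ev e.1 e.2}

def red1 {n : ℕ} (E : EdgeSet n) (i j k : Fin (n+1)) : EdgeSet n :=
  insert (i, k) (E.erase (j, k))

def red2 {n : ℕ} (E : EdgeSet n) (i j k : Fin (n+1)) : EdgeSet n :=
  insert (i, k) (E.erase (i, j))

def red3 {n : ℕ} (E : EdgeSet n) (i j k : Fin (n+1)) : EdgeSet n :=
  insert (i, k) ((E.erase (i, j)).erase (j, k))

/-- Finite ternary trees with nodes labeled by graphs on `[n+1]`. -/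
inductive SRTree (n : ℕ) : Type
  | leaf : EdgeSet n → SRTree n
  | node : EdgeSet n → SRTree n → SRTree n → SRTree n → SRTree n

namespace SRTree

def root {n : ℕ} : SRTree n → EdgeSet n
  | leaf E => E
  | node E _ _ _ => E

/-- An S-reduction tree: every internal node's children come from a reduction of its
label, and every leaf is labeled by an alternating graph. -/
def Valid {n : ℕ} : SRTree n → Prop
  | leaf E => Alternating E
  | node E t1 t2 t3 =>
      (∃ i j k : Fin (n+1), i < j ∧ j < k ∧ (i, j) ∈ E ∧ (j, k) ∈ E ∧
        t1.root = red1 E i j k ∧ t2.root = red2 E i j k ∧ t3.root = red3 E i j k) ∧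
      t1.Valid ∧ t2.Valid ∧ t3.Valid

/-- Number of leaves labeled by a graph with exactly `k` edges. -/
def leafCount {n : ℕ} (k : ℕ) : SRTree n → ℕ
  | leaf E => if E.card = k then 1 else 0
  | node _ t1 t2 t3 => leafCount k t1 + leafCount k t2 + leafCount k t3

end SRTree

/-! Everything is detected by integral potentials `φ : [n+1] → ℤ`, acting by `x ↦ ∑ φ i * x i`.
Reducing a graph at `e`, `f` writes its cone as the union of the cones of the first two reduced
graphs, so induction over the tree leads to alternating graphs, where the indicator of the tails is
`1` on every edge: the `t`-th dilate of the root polytope is the part of the cone on which every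
`0/1`-valued potential is at most `t`. For a forest the first two cones meet exactly in the third,
because the potential dual to `e` in the first reduced graph is nonpositive on the second. Lattice
points are therefore counted by inclusion–exclusion, and for an alternating forest with `m` edges
they are those of a unimodular simplex, `(t + m).choose m` in number. Hence
`∑ m, (-1) ^ (l - m) * f m * (t + m).choose m`, where `f m` counts the leaves with `m` edges, is the
Ehrhart polynomial of the root polytope, and only the term `m = l` has degree `l`. -/

open Filter Finset Topology
open scoped Pointwise

section Preliminaries

theorem insert_erase_erase_subset {α : Type*} [DecidableEq α] (s : Finset α) (a b c : α) :
    insert c ((s.erase a).erase b) ⊆ insert c (s.erase b) :=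
  insert_subset_insert c (erase_subset_erase b (erase_subset a s))

theorem sum_smul_mem_smul_of_sum_le {𝕜 V ι : Type*} [Field 𝕜] [LinearOrder 𝕜]
    [IsStrictOrderedRing 𝕜] [AddCommGroup V] [Module 𝕜 V] {P : Set V} (hP : Convex 𝕜 P)
    (h0 : 0 ∈ P) {s : Finset ι} {w : ι → 𝕜} {v : ι → V} {t : 𝕜}
    (hw : ∀ i ∈ s, 0 ≤ w i) (hv : ∀ i ∈ s, v i ∈ P) (ht : ∑ i ∈ s, w i ≤ t) :
    ∑ i ∈ s, w i • v i ∈ t • P := by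
  have sum_mem : ∑ i ∈ s, w i • v i ∈ (∑ i ∈ s, w i) • P := by
    classical
    induction s using Finset.induction_on with
    | empty => exact ⟨0, h0, by simp⟩
    | insert a s ha ih =>
      rw [forall_mem_insert] at hw hv
      rw [sum_insert ha] at ht
      rw [sum_insert ha, sum_insert ha, hP.add_smul hw.1 (sum_nonneg hw.2)]
      exact Set.add_mem_add (Set.smul_mem_smul_set hv.1) (ih hw.2 hv.2 (by linarith [hw.1]))
  rw [← add_sub_cancel (∑ i ∈ s, w i) t, hP.add_smul (sum_nonneg hw) (sub_nonneg.2 ht)]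
  exact ⟨_, sum_mem, 0, ⟨0, h0, smul_zero _⟩, add_zero _⟩

theorem ncard_finsupp_sum_le {ι : Type*} (s : Finset ι) (t : ℕ) :
    {c : ι →₀ ℕ | c.support ⊆ s ∧ ∑ i ∈ s, c i ≤ t}.ncard = (t + #s).choose #s := by
  classical
  have eq_biUnion : {c : ι →₀ ℕ | c.support ⊆ s ∧ ∑ i ∈ s, c i ≤ t} =
      ((range (t + 1)).biUnion (s.finsuppAntidiag ·) : Finset (ι →₀ ℕ)) := by
    ext c
    simp [mem_finsuppAntidiag, and_comm]
  rw [eq_biUnion, Set.ncard_coe_finset, card_biUnion]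
  · simp only [card_finsuppAntidiag_nat_eq_multichoose]
    rw [Nat.sum_range_multichoose, add_comm t, Nat.choose_symm_add]
  · intro a _ b _ hab
    refine disjoint_left.2 fun c ha hb => hab ?_
    rw [mem_finsuppAntidiag] at ha hb
    exact ha.1.symm.trans hb.1

theorem isEquivalent_add_choose (m : ℕ) :
    Asymptotics.IsEquivalent atTop (fun t : ℕ => ((t + m).choose m : ℝ))
      (fun t : ℕ => (t : ℝ) ^ m / m.factorial) := by
  have shift : Asymptotics.IsEquivalent atTop (fun t : ℕ => (t : ℝ))
      (fun t => ((t + m : ℕ) : ℝ)) := by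
    refine Asymptotics.isEquivalent_of_tendsto_one ?_
    simpa [Pi.div_def] using tendsto_natCast_div_add_atTop (m : ℝ)
  exact ((isEquivalent_choose m).comp_tendsto (tendsto_add_atTop_nat m)).trans
    ((shift.symm.pow m).div .refl)

theorem tendsto_add_choose_div_pow_self (m : ℕ) :
    Tendsto (fun t : ℕ => ((t + m).choose m : ℝ) / (t : ℝ) ^ m) atTop
      (𝓝 (m.factorial : ℝ)⁻¹) := by
  refine ((isEquivalent_add_choose m).div .refl).symm.tendsto_nhds
    (tendsto_const_nhds.congr' ?_)
  filter_upwards [eventually_ne_atTop 0] with t ht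
  simp only [Pi.div_apply]
  field_simp

theorem tendsto_add_choose_div_pow_of_lt {m l : ℕ} (h : m < l) :
    Tendsto (fun t : ℕ => ((t + m).choose m : ℝ) / (t : ℝ) ^ l) atTop (𝓝 0) := by
  refine ((isEquivalent_add_choose m).div .refl).symm.tendsto_nhds ?_
  simpa [Pi.div_def, Function.comp_def, div_right_comm] using
    ((tendsto_pow_div_pow_atTop_zero h).comp tendsto_natCast_atTop_atTop).div_const
      (m.factorial : ℝ)

theorem tendsto_sum_mul_add_choose_div_pow (a : ℕ → ℝ) (l : ℕ) :
    Tendsto (fun t : ℕ => (∑ m ∈ range (l + 1), a m * (t + m).choose m) / (t : ℝ) ^ l) atTop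
      (𝓝 (a l / l.factorial)) := by
  have lower_terms : Tendsto
      (fun t : ℕ => ∑ m ∈ range l, a m * ((t + m).choose m / (t : ℝ) ^ l)) atTop (𝓝 0) := by
    simpa using tendsto_finsetSum (range l) fun m hm =>
      (tendsto_add_choose_div_pow_of_lt (mem_range.1 hm)).const_mul (a m)
  simpa only [sum_range_succ, add_div, sum_div, mul_div_assoc, zero_add, div_eq_mul_inv (a l)] using
    lower_terms.add ((tendsto_add_choose_div_pow_self l).const_mul (a l))

end Preliminaries

section Cones

variable {n : ℕ} {E E' : EdgeSet n} {x : Vtype n}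

theorem cone_eq_hull (E : EdgeSet n) :
    cone E = PointedCone.hull ℝ ((fun e : Edge n => ev e.1 e.2) '' (E : Set (Edge n))) := by
  ext x
  rw [SetLike.mem_coe, PointedCone.hull, Submodule.mem_span_image_finset_iff_exists_fun']
  constructor
  · rintro ⟨c, hc, rfl⟩
    exact ⟨fun e => ⟨c e, hc e⟩, rfl⟩
  · rintro ⟨c, rfl⟩
    exact ⟨fun e => c e, fun e => (c e).2, rfl⟩

theorem zero_mem_cone (E : EdgeSet n) : 0 ∈ cone E := by
  rw [cone_eq_hull]
  exact zero_mem _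

theorem ev_mem_cone {e : Edge n} (he : e ∈ E) : ev e.1 e.2 ∈ cone E := by
  rw [cone_eq_hull]
  exact PointedCone.subset_hull (Set.mem_image_of_mem _ he)

theorem convex_cone (E : EdgeSet n) : Convex ℝ (cone E) := by
  rw [cone_eq_hull]
  exact PointedCone.convex _

theorem smul_mem_cone (hx : x ∈ cone E) {a : ℝ} (ha : 0 ≤ a) : a • x ∈ cone E := by
  rw [cone_eq_hull] at hx ⊢
  exact PointedCone.smul_mem _ ha hx

theorem sum_smul_mem_cone {s : EdgeSet n} {c : Edge n → ℝ} (hc : ∀ e ∈ s, 0 ≤ c e)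
    (hs : ∀ e ∈ s, ev e.1 e.2 ∈ cone E) : ∑ e ∈ s, c e • ev e.1 e.2 ∈ cone E := by
  rw [cone_eq_hull] at hs ⊢
  exact sum_mem fun e he => PointedCone.smul_mem _ (hc e he) (hs e he)

theorem add_mem_cone {y : Vtype n} (hx : x ∈ cone E) (hy : y ∈ cone E) : x + y ∈ cone E := by
  rw [cone_eq_hull] at hx hy ⊢
  exact add_mem hx hy

theorem cone_subset_cone (h : ∀ e ∈ E, ev e.1 e.2 ∈ cone E') : cone E ⊆ cone E' := by
  rintro _ ⟨c, hc, rfl⟩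
  exact sum_smul_mem_cone (fun e _ => hc e) h

theorem cone_mono (h : E ⊆ E') : cone E ⊆ cone E' :=
  cone_subset_cone fun _ he => ev_mem_cone (h he)

theorem ev_add_ev (i j k : Fin (n + 1)) : (ev i j + ev j k : Vtype n) = ev i k :=
  sub_add_sub_cancel _ _ _

end Cones

section Potentials

variable {n : ℕ} {E : EdgeSet n} {e : Edge n} {φ : Fin (n + 1) → ℤ} {x : Vtype n}

/-- The linear functional `x ↦ ∑ i, φ i * x i` of an integral potential `φ`. Potentials are
integer-valued so that the functional is an integer at every lattice point. -/
noncomputable def pairing (φ : Fin (n + 1) → ℤ) : Vtype n →ₗ[ℝ] ℝ :=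
  ∑ i, (φ i : ℝ) • LinearMap.proj i

theorem pairing_apply (φ : Fin (n + 1) → ℤ) (x : Vtype n) :
    pairing φ x = ∑ i, (φ i : ℝ) * x i := by
  simp [pairing]

theorem pairing_ev (φ : Fin (n + 1) → ℤ) (i j : Fin (n + 1)) :
    pairing φ (ev i j) = φ i - φ j := by
  simp [pairing_apply, ev, mul_sub, Pi.single_apply]

theorem pairing_sub (φ ψ : Fin (n + 1) → ℤ) (x : Vtype n) :
    pairing (φ - ψ) x = pairing φ x - pairing ψ x := by
  simp [pairing_apply, sub_mul]

theorem pairing_single_one (i : Fin (n + 1)) (x : Vtype n) : pairing (Pi.single i 1) x = x i := by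
  simp [pairing_apply, Pi.single_apply]

theorem pairing_nonpos_of_mem_cone (hφ : ∀ e ∈ E, pairing φ (ev e.1 e.2) ≤ 0) (hx : x ∈ cone E) :
    pairing φ x ≤ 0 := by
  obtain ⟨c, hc, rfl⟩ := hx
  simp only [map_sum, map_smul, smul_eq_mul]
  exact sum_nonpos fun e he => mul_nonpos_of_nonneg_of_nonpos (hc e) (hφ e he)

theorem pairing_one_of_mem_cone (hx : x ∈ cone E) : pairing 1 x = 0 := by
  obtain ⟨c, -, rfl⟩ := hx
  simp [pairing_ev]

/-- The potential `φ` is dual to the edge `e` of `E`: its functional is `1` on the root vector of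
`e` and vanishes on the root vectors of the other edges. -/
def IsDualPotential (E : EdgeSet n) (e : Edge n) (φ : Fin (n + 1) → ℤ) : Prop :=
  pairing φ (ev e.1 e.2) = 1 ∧ ∀ f ∈ E, f ≠ e → pairing φ (ev f.1 f.2) = 0

/-- The root vectors of `E` extend to a lattice basis, as witnessed by a dual potential for each
edge. This is how acyclicity enters: it is stable under reduction by linear algebra alone. -/
def Unimodular (E : EdgeSet n) : Prop := ∀ e ∈ E, ∃ φ, IsDualPotential E e φ

theorem IsDualPotential.pairing_sum (hφ : IsDualPotential E e φ) (he : e ∈ E) (c : Edge n → ℝ) :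
    pairing φ (∑ f ∈ E, c f • ev f.1 f.2) = c e := by
  rw [map_sum, sum_eq_single_of_mem e he]
  · simp [hφ.1]
  · intro f hf hfe
    simp [hφ.2 f hf hfe]

theorem IsDualPotential.mem_cone_erase (hφ : IsDualPotential E e φ) (he : e ∈ E) (hx : x ∈ cone E)
    (hφx : pairing φ x ≤ 0) : x ∈ cone (E.erase e) := by
  obtain ⟨c, hc, rfl⟩ := hx
  rw [hφ.pairing_sum he] at hφx
  refine ⟨c, hc, (sum_erase E ?_).symm⟩
  rw [le_antisymm hφx (hc e), zero_smul]

theorem Unimodular.mono {E' : EdgeSet n} (hE : Unimodular E) (h : E' ⊆ E) : Unimodular E' := by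
  intro e he
  obtain ⟨φ, hφe, hφ⟩ := hE e (h he)
  exact ⟨φ, hφe, fun f hf => hφ f (h hf)⟩

/-- The dual potential of an edge is the indicator of one side of the cut it defines. -/
theorem IsForest.unimodular (hE : IsForest E) : Unimodular E := by
  classical
  rintro ⟨a, b⟩ he
  have adj_of_mem : ∀ {f : Edge n}, f ∈ E → (toSG E).Adj f.1 f.2 := fun hf =>
    (SimpleGraph.fromRel_adj _ _ _).2 ⟨(hE.1 _ hf).ne, .inl hf⟩
  let H := (toSG E).deleteEdges {s(a, b)}
  have not_reachable : ¬ H.Reachable a b :=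
    SimpleGraph.isBridge_iff.1
      (SimpleGraph.isAcyclic_iff_forall_adj_isBridge.1 hE.2 (adj_of_mem he))
  refine ⟨fun v => if H.Reachable a v then 1 else 0, by simp [pairing_ev, not_reachable], ?_⟩
  rintro ⟨c, d⟩ hf hfe
  have adj : H.Adj c d := by
    refine SimpleGraph.deleteEdges_adj.2 ⟨adj_of_mem hf, fun heq => ?_⟩
    rcases Sym2.eq_iff.1 heq with ⟨rfl, rfl⟩ | ⟨rfl, rfl⟩
    · exact hfe rfl
    · exact (hE.1 _ he).asymm (hE.1 _ hf)
  have same_side : H.Reachable a c ↔ H.Reachable a d :=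
    ⟨fun h => h.trans adj.reachable, fun h => h.trans adj.reachable.symm⟩
  simp [pairing_ev, same_side]

end Potentials

section Reductions

variable {n : ℕ} {E : EdgeSet n} {e f g : Edge n}

/-- The graph `E` can be reduced at its edges `e`, `f` with new edge `g`: they are `(i, j)` and
`(j, k)`, in either order, and `(i, k)`. The reduced graphs are `insert g (E.erase f)`,
`insert g (E.erase e)` and `insert g ((E.erase e).erase f)`. The path condition is recorded as a
relation between root vectors, which makes the notion symmetric in `e` and `f`. -/
structure IsReduction (E : EdgeSet n) (e f g : Edge n) : Prop where
  left_mem : e ∈ E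
  right_mem : f ∈ E
  ne : e ≠ f
  lt : g.1 < g.2
  ev_eq : (ev g.1 g.2 : Vtype n) = ev e.1 e.2 + ev f.1 f.2

namespace IsReduction

theorem symm (r : IsReduction E e f g) : IsReduction E f e g :=
  ⟨r.right_mem, r.left_mem, r.ne.symm, r.lt, r.ev_eq.trans (add_comm _ _)⟩

theorem isGraph (r : IsReduction E e f g) (hE : IsGraph E) : IsGraph (insert g (E.erase f)) :=
  forall_mem_insert _ _ _ |>.2 ⟨r.lt, fun h hh => hE h (mem_of_mem_erase hh)⟩

theorem pairing_eq (r : IsReduction E e f g) (φ : Fin (n + 1) → ℤ) :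
    pairing φ (ev g.1 g.2) = pairing φ (ev e.1 e.2) + pairing φ (ev f.1 f.2) := by
  rw [r.ev_eq, map_add]

theorem cone_subset (r : IsReduction E e f g) : cone (insert g (E.erase f)) ⊆ cone E := by
  refine cone_subset_cone ((forall_mem_insert _ _ _).2 ⟨?_, fun h hh => ?_⟩)
  · rw [r.ev_eq]
    exact add_mem_cone (ev_mem_cone r.left_mem) (ev_mem_cone r.right_mem)
  · exact ev_mem_cone (mem_of_mem_erase hh)

theorem sum_mem_cone (r : IsReduction E e f g) {c : Edge n → ℝ} (hc : ∀ h, 0 ≤ c h)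
    (hfe : c f ≤ c e) : ∑ h ∈ E, c h • ev h.1 h.2 ∈ cone (insert g (E.erase f)) := by
  have he : e ∈ E.erase f := mem_erase.2 ⟨r.ne, r.left_mem⟩
  have decomposition : ∑ h ∈ E, c h • ev h.1 h.2 = c f • ev g.1 g.2 +
      ((c e - c f) • ev e.1 e.2 + ∑ h ∈ (E.erase f).erase e, c h • ev h.1 h.2) := by
    rw [← add_sum_erase E _ r.right_mem, ← add_sum_erase _ _ he, r.ev_eq]
    module
  rw [decomposition]
  refine add_mem_cone (smul_mem_cone (ev_mem_cone (mem_insert_self _ _)) (hc f)) (add_mem_cone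
    (smul_mem_cone (ev_mem_cone (mem_insert_of_mem he)) (sub_nonneg.2 hfe)) ?_)
  exact sum_smul_mem_cone (fun h _ => hc h) fun h hh =>
    ev_mem_cone (mem_insert_of_mem (mem_of_mem_erase hh))

theorem cone_eq_union (r : IsReduction E e f g) :
    cone E = cone (insert g (E.erase f)) ∪ cone (insert g (E.erase e)) := by
  refine Set.Subset.antisymm ?_ (Set.union_subset r.cone_subset r.symm.cone_subset)
  rintro _ ⟨c, hc, rfl⟩
  exact (le_total (c f) (c e)).imp (r.sum_mem_cone hc) (r.symm.sum_mem_cone hc)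

theorem notMem (r : IsReduction E e f g) (hE : Unimodular E) : g ∉ E := by
  intro hg
  obtain ⟨φ, hφe, hφ⟩ := hE e r.left_mem
  obtain ⟨ψ, hψf, hψ⟩ := hE f r.right_mem
  have hφg : pairing φ (ev g.1 g.2) = 1 := by
    rw [r.pairing_eq, hφe, hφ f r.right_mem r.ne.symm, add_zero]
  have hψg : pairing ψ (ev g.1 g.2) = 1 := by
    rw [r.pairing_eq, hψf, hψ e r.left_mem r.ne, zero_add]
  have hge : g = e := by_contra fun h => one_ne_zero (hφg.symm.trans (hφ g hg h))
  have hgf : g = f := by_contra fun h => one_ne_zero (hψg.symm.trans (hψ g hg h))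
  exact r.ne (hge.symm.trans hgf)

/-- The difference of potentials dual to `e` and `f` in `E` has these properties. -/
theorem exists_isDualPotential_left (r : IsReduction E e f g) (hE : Unimodular E) :
    ∃ φ, IsDualPotential (insert g (E.erase f)) e φ ∧ pairing φ (ev f.1 f.2) = -1 := by
  obtain ⟨φ, hφe, hφ⟩ := hE e r.left_mem
  obtain ⟨ψ, hψf, hψ⟩ := hE f r.right_mem
  have hφf := hφ f r.right_mem r.ne.symm
  have hψe := hψ e r.left_mem r.ne
  refine ⟨φ - ψ, ⟨by simp [pairing_sub, *], (forall_mem_insert _ _ _).2 ⟨fun _ => ?_, ?_⟩⟩,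
    by simp [pairing_sub, *]⟩
  · simp [r.pairing_eq, pairing_sub, *]
  · intro h hh hhe
    rw [mem_erase] at hh
    simp [pairing_sub, hφ h hh.2 hhe, hψ h hh.2 hh.1]

theorem unimodular (r : IsReduction E e f g) (hE : Unimodular E) :
    Unimodular (insert g (E.erase f)) := by
  refine (forall_mem_insert _ _ _).2 ⟨?_, fun h hh => ?_⟩
  · obtain ⟨ψ, hψf, hψ⟩ := hE f r.right_mem
    refine ⟨ψ, ?_, (forall_mem_insert _ _ _).2 ⟨fun hg => (hg rfl).elim, fun h hh _ => ?_⟩⟩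
    · rw [r.pairing_eq, hψf, hψ e r.left_mem r.ne, zero_add]
    · exact hψ h (mem_of_mem_erase hh) (ne_of_mem_erase hh)
  · by_cases hhe : h = e
    · obtain ⟨φ, hφ, -⟩ := r.exists_isDualPotential_left hE
      exact ⟨φ, hhe ▸ hφ⟩
    · obtain ⟨φ, hφh, hφ⟩ := hE h (mem_of_mem_erase hh)
      refine ⟨φ, hφh, (forall_mem_insert _ _ _).2 ⟨fun _ => ?_, fun k hk => ?_⟩⟩
      · rw [r.pairing_eq, hφ e r.left_mem (Ne.symm hhe),
          hφ f r.right_mem (ne_of_mem_erase hh).symm, add_zero]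
      · exact hφ k (mem_of_mem_erase hk)

theorem cone_inter_cone (r : IsReduction E e f g) (hE : Unimodular E) :
    cone (insert g (E.erase f)) ∩ cone (insert g (E.erase e)) =
      cone (insert g ((E.erase e).erase f)) := by
  obtain ⟨φ, hφ, hφf⟩ := r.exists_isDualPotential_left hE
  have hge : g ≠ e := fun h => r.notMem hE (h ▸ r.left_mem)
  have nonpos : ∀ h ∈ insert g (E.erase e), pairing φ (ev h.1 h.2) ≤ 0 := by
    refine (forall_mem_insert _ _ _).2 ⟨(hφ.2 g (mem_insert_self _ _) hge).le, fun h hh => ?_⟩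
    by_cases hhf : h = f
    · rw [hhf, hφf]
      norm_num
    · rw [mem_erase] at hh
      exact (hφ.2 h (mem_insert_of_mem (mem_erase.2 ⟨hhf, hh.2⟩)) hh.1).le
  refine Set.Subset.antisymm (fun x hx => ?_) (Set.subset_inter
    (cone_mono (insert_erase_erase_subset E e f g)) (cone_mono ?_))
  · rw [erase_right_comm, ← erase_insert_of_ne hge]
    exact hφ.mem_cone_erase (mem_insert_of_mem (mem_erase.2 ⟨r.ne, r.left_mem⟩)) hx.1
      (pairing_nonpos_of_mem_cone nonpos hx.2)
  · rw [erase_right_comm]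
    exact insert_erase_erase_subset E f e g

theorem card_insert_erase (r : IsReduction E e f g) (hE : Unimodular E) :
    #(insert g (E.erase f)) = #E := by
  rw [card_insert_of_notMem fun hg => r.notMem hE (mem_of_mem_erase hg),
    card_erase_add_one r.right_mem]

theorem card_insert_erase_erase (r : IsReduction E e f g) (hE : Unimodular E) :
    #(insert g ((E.erase e).erase f)) + 1 = #E := by
  rw [card_insert_of_notMem fun hg => r.notMem hE (mem_of_mem_erase (mem_of_mem_erase hg)),
    card_erase_add_one (mem_erase.2 ⟨r.ne.symm, r.right_mem⟩), card_erase_add_one r.left_mem]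

end IsReduction

end Reductions

section TruncatedCones

variable {n : ℕ} {E : EdgeSet n} {t : ℝ} {x : Vtype n}

/-- The part of the cone of `E` on which every `0/1`-valued potential is at most `t`: an inequality
description of `t` times the root polytope, for graphs with an S-reduction tree. -/
def truncatedCone (E : EdgeSet n) (t : ℝ) : Set (Vtype n) :=
  {x ∈ cone E | ∀ φ : Fin (n + 1) → ℤ, 0 ≤ φ → φ ≤ 1 → pairing φ x ≤ t}

theorem pairing_ev_le_one {φ : Fin (n + 1) → ℤ} (h0 : 0 ≤ φ) (h1 : φ ≤ 1) (i j : Fin (n + 1)) :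
    pairing φ (ev i j) ≤ 1 := by
  have hi : (φ i : ℝ) ≤ 1 := mod_cast h1 i
  have hj : (0 : ℝ) ≤ φ j := mod_cast h0 j
  rw [pairing_ev]
  linarith

theorem rootPoly_subset_truncatedCone (E : EdgeSet n) : RootPoly E ⊆ truncatedCone E 1 := by
  refine fun x hx => ⟨convexHull_min ?_ (convex_cone E) hx, fun φ h0 h1 =>
    convexHull_min ?_ (convex_halfSpace_le (pairing φ).isLinear 1) hx⟩
  · exact Set.union_subset (Set.singleton_subset_iff.2 (zero_mem_cone E)) Set.inter_subset_right
  · rintro _ (rfl | ⟨⟨i, j, -, rfl⟩, -⟩)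
    · simp
    · exact pairing_ev_le_one h0 h1 i j

theorem rootPoly_mono {E' : EdgeSet n} (h : cone E ⊆ cone E') : RootPoly E ⊆ RootPoly E' :=
  convexHull_mono (Set.union_subset_union_right _ (Set.inter_subset_inter_right _ h))

theorem dilate_rootPoly_subset_truncatedCone (E : EdgeSet n) (t : ℕ) :
    dilate t (RootPoly E) ⊆ truncatedCone E t := by
  rintro _ ⟨x, hx, rfl⟩
  obtain ⟨hx, hφ⟩ := rootPoly_subset_truncatedCone E hx
  refine ⟨smul_mem_cone hx t.cast_nonneg, fun φ h0 h1 => ?_⟩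
  rw [map_smul, smul_eq_mul]
  exact mul_le_of_le_one_right t.cast_nonneg (hφ φ h0 h1)

theorem sum_smul_mem_truncatedCone {c : Edge n → ℝ} (hc : ∀ e, 0 ≤ c e) (ht : ∑ e ∈ E, c e ≤ t) :
    ∑ e ∈ E, c e • ev e.1 e.2 ∈ truncatedCone E t := by
  refine ⟨⟨c, hc, rfl⟩, fun φ h0 h1 => le_trans ?_ ht⟩
  rw [map_sum]
  refine sum_le_sum fun e _ => ?_
  rw [map_smul, smul_eq_mul]
  exact mul_le_of_le_one_right (hc e) (pairing_ev_le_one h0 h1 e.1 e.2)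

/-- In an alternating graph no vertex is both a tail and a head, so the indicator of the tails is
such a potential. -/
theorem Alternating.exists_potential (hA : Alternating E) (hE : IsGraph E) :
    ∃ φ : Fin (n + 1) → ℤ, 0 ≤ φ ∧ φ ≤ 1 ∧ ∀ e ∈ E, pairing φ (ev e.1 e.2) = 1 := by
  classical
  refine ⟨fun i => if ∃ j, (i, j) ∈ E then 1 else 0, fun i => ?_, fun i => ?_, ?_⟩
  · dsimp only [Pi.zero_apply]
    split_ifs <;> norm_num
  · dsimp only [Pi.one_apply]
    split_ifs <;> norm_num
  · rintro ⟨i, j⟩ hij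
    have tail : ∃ k, (i, k) ∈ E := ⟨j, hij⟩
    have head : ¬ ∃ k, (j, k) ∈ E := fun ⟨k, hjk⟩ => hA ⟨i, j, k, hE _ hij, hE _ hjk, hij, hjk⟩
    simp [pairing_ev, tail, head]

theorem Alternating.sum_le_of_mem_truncatedCone (hA : Alternating E) (hE : IsGraph E)
    {c : Edge n → ℝ} (hx : ∑ e ∈ E, c e • ev e.1 e.2 ∈ truncatedCone E t) : ∑ e ∈ E, c e ≤ t := by
  obtain ⟨φ, h0, h1, hφ⟩ := hA.exists_potential hE
  have hsum : pairing φ (∑ e ∈ E, c e • ev e.1 e.2) = ∑ e ∈ E, c e := by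
    rw [map_sum]
    exact sum_congr rfl fun e he => by rw [map_smul, hφ e he, smul_eq_mul, mul_one]
  exact hsum ▸ hx.2 φ h0 h1

theorem Alternating.truncatedCone_subset_dilate_rootPoly (hA : Alternating E) (hE : IsGraph E)
    (t : ℕ) : truncatedCone E t ⊆ dilate t (RootPoly E) := by
  rintro x hx
  obtain ⟨c, hc, rfl⟩ := hx.1
  exact sum_smul_mem_smul_of_sum_le (convex_convexHull ℝ _)
    (subset_convexHull ℝ _ (.inl rfl)) (fun e _ => hc e)
    (fun e he => subset_convexHull ℝ _ (.inr ⟨⟨e.1, e.2, hE e he, rfl⟩, ev_mem_cone he⟩))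
    (hA.sum_le_of_mem_truncatedCone hE hx)

theorem IsReduction.truncatedCone_eq_union {e f g : Edge n} (r : IsReduction E e f g) (t : ℝ) :
    truncatedCone E t =
      truncatedCone (insert g (E.erase f)) t ∪ truncatedCone (insert g (E.erase e)) t := by
  simp only [truncatedCone, r.cone_eq_union, Set.mem_union, or_and_right, Set.ofPred_or]

theorem IsReduction.truncatedCone_inter {e f g : Edge n} (r : IsReduction E e f g)
    (hE : Unimodular E) (t : ℝ) :
    truncatedCone (insert g (E.erase f)) t ∩ truncatedCone (insert g (E.erase e)) t =
      truncatedCone (insert g ((E.erase e).erase f)) t := by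
  ext x
  simp only [truncatedCone, ← r.cone_inter_cone hE, Set.mem_inter_iff, Set.mem_ofPred_eq,
    and_and_and_comm, and_self]

end TruncatedCones

section LatticePoints

variable {n : ℕ} {E : EdgeSet n} {t : ℕ} {x : Vtype n}

/-- The integral points of the truncated cone. -/
def latticePoints (E : EdgeSet n) (t : ℕ) : Set (Vtype n) :=
  {x ∈ truncatedCone E t | ∀ i, ∃ z : ℤ, x i = z}

theorem abs_apply_le_of_mem_truncatedCone {t : ℝ} (hx : x ∈ truncatedCone E t) (i : Fin (n + 1)) :
    |x i| ≤ t := by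
  have single_nonneg : (0 : Fin (n + 1) → ℤ) ≤ Pi.single i 1 := Pi.single_nonneg.2 zero_le_one
  have single_le : (Pi.single i 1 : Fin (n + 1) → ℤ) ≤ 1 :=
    update_le_iff.2 ⟨le_rfl, fun _ _ => zero_le_one⟩
  have upper := hx.2 (Pi.single i 1) single_nonneg single_le
  have lower := hx.2 (1 - Pi.single i 1) (sub_nonneg.2 single_le) (sub_le_self _ single_nonneg)
  rw [pairing_sub, pairing_one_of_mem_cone hx.1, zero_sub] at lower
  rw [pairing_single_one] at upper lower
  exact abs_le.2 ⟨by linarith, upper⟩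

theorem finite_latticePoints (E : EdgeSet n) (t : ℕ) : (latticePoints E t).Finite := by
  refine ((Set.finite_Icc (fun _ => -(t : ℤ)) (fun _ : Fin (n + 1) => (t : ℤ))).image
    fun z i => (z i : ℝ)).subset fun x ⟨hx, hz⟩ => ?_
  choose z hz using hz
  have bound : ∀ i, |z i| ≤ t := fun i => by
    have := abs_apply_le_of_mem_truncatedCone hx i
    rw [hz i] at this
    exact_mod_cast this
  exact ⟨z, ⟨fun i => (abs_le.1 (bound i)).1, fun i => (abs_le.1 (bound i)).2⟩,
    funext fun i => (hz i).symm⟩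

theorem IsReduction.ncard_latticePoints {e f g : Edge n} (r : IsReduction E e f g)
    (hE : Unimodular E) (t : ℕ) :
    (latticePoints E t).ncard + (latticePoints (insert g ((E.erase e).erase f)) t).ncard =
      (latticePoints (insert g (E.erase f)) t).ncard +
        (latticePoints (insert g (E.erase e)) t).ncard := by
  have union : latticePoints E t =
      latticePoints (insert g (E.erase f)) t ∪ latticePoints (insert g (E.erase e)) t := by
    simp only [latticePoints, r.truncatedCone_eq_union, Set.mem_union, or_and_right, Set.ofPred_or]
  have inter : latticePoints (insert g ((E.erase e).erase f)) t =
      latticePoints (insert g (E.erase f)) t ∩ latticePoints (insert g (E.erase e)) t := by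
    ext x
    simp only [latticePoints, ← r.truncatedCone_inter hE, Set.mem_inter_iff, Set.mem_ofPred_eq,
      and_and_and_comm, and_self]
  rw [union, inter]
  exact Set.ncard_union_add_ncard_inter _ _ (finite_latticePoints _ _) (finite_latticePoints _ _)

theorem exists_int_pairing (φ : Fin (n + 1) → ℤ) (hx : ∀ i, ∃ z : ℤ, x i = z) :
    ∃ z : ℤ, pairing φ x = z := by
  choose z hz using hx
  exact ⟨∑ i, φ i * z i, by simp [pairing_apply, hz]⟩

theorem exists_int_ev (i j k : Fin (n + 1)) : ∃ z : ℤ, ev i j k = z :=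
  ⟨(Pi.single i 1 - Pi.single j 1 : Fin (n + 1) → ℤ) k, by simp [ev, Pi.single_apply]⟩

theorem Unimodular.exists_nat_eq (hE : Unimodular E) {c : Edge n → ℝ} (hc : ∀ e, 0 ≤ c e)
    (hx : ∀ i, ∃ z : ℤ, (∑ e ∈ E, c e • ev e.1 e.2) i = z) {e : Edge n} (he : e ∈ E) :
    ∃ k : ℕ, (k : ℝ) = c e := by
  obtain ⟨φ, hφ⟩ := hE e he
  obtain ⟨z, hz⟩ := exists_int_pairing φ hx
  rw [hφ.pairing_sum he] at hz
  have hz0 : 0 ≤ z := by exact_mod_cast hz ▸ hc e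
  lift z to ℕ using hz0
  exact ⟨z, by simp [hz]⟩

theorem Unimodular.injOn_sum_smul (hE : Unimodular E) :
    Set.InjOn (fun c : Edge n →₀ ℕ => ∑ e ∈ E, (c e : ℝ) • ev e.1 e.2) {c | c.support ⊆ E} := by
  intro c hc d hd hcd
  ext e
  by_cases he : e ∈ E
  · obtain ⟨φ, hφ⟩ := hE e he
    have := congrArg (pairing φ) hcd
    dsimp only at this
    rw [hφ.pairing_sum he (fun e => c e), hφ.pairing_sum he (fun e => d e)] at this
    exact_mod_cast this
  · rw [Finsupp.notMem_support_iff.1 fun h => he (hc h),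
      Finsupp.notMem_support_iff.1 fun h => he (hd h)]

theorem Alternating.latticePoints_eq_image (hA : Alternating E) (hE : IsGraph E)
    (hU : Unimodular E) (t : ℕ) :
    latticePoints E t = (fun c : Edge n →₀ ℕ => ∑ e ∈ E, (c e : ℝ) • ev e.1 e.2) ''
      {c | c.support ⊆ E ∧ ∑ e ∈ E, c e ≤ t} := by
  refine Set.Subset.antisymm (fun x ⟨hx, hint⟩ => ?_) ?_
  · obtain ⟨c, hc, rfl⟩ := hx.1
    have hsum := hA.sum_le_of_mem_truncatedCone hE hx
    choose! k hk using fun e he => hU.exists_nat_eq hc hint (e := e) he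
    have hval : ∀ e ∈ E, Finsupp.indicator E (fun e _ => k e) e = k e := fun e he =>
      Finsupp.indicator_of_mem he _
    refine ⟨Finsupp.indicator E fun e _ => k e, ⟨Finsupp.support_indicator_subset _ _, ?_⟩, ?_⟩
    · rw [sum_congr rfl hval]
      rw [← sum_congr rfl hk] at hsum
      exact_mod_cast hsum
    · exact sum_congr rfl fun e he => by rw [hval e he, hk e he]
  · rintro _ ⟨c, ⟨-, hc⟩, rfl⟩
    refine ⟨sum_smul_mem_truncatedCone (fun e => (c e).cast_nonneg) (mod_cast hc), fun i => ?_⟩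
    choose z hz using fun e : Edge n => exists_int_ev e.1 e.2 i
    exact ⟨∑ e ∈ E, c e * z e, by simp [hz]⟩

theorem Alternating.ncard_latticePoints (hA : Alternating E) (hE : IsGraph E) (hU : Unimodular E)
    (t : ℕ) : (latticePoints E t).ncard = (t + #E).choose #E := by
  rw [hA.latticePoints_eq_image hE hU, (hU.injOn_sum_smul.mono fun _ hc => hc.1).ncard_image,
    ncard_finsupp_sum_le]

end LatticePoints

namespace SRTree

variable {n : ℕ}

theorem Valid.exists_isReduction {E : EdgeSet n} {R₁ R₂ R₃ : SRTree n}
    (hR : (node E R₁ R₂ R₃).Valid) : ∃ e f g, IsReduction E e f g ∧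
      R₁.root = insert g (E.erase f) ∧ R₂.root = insert g (E.erase e) ∧
      R₃.root = insert g ((E.erase e).erase f) := by
  obtain ⟨⟨i, j, k, hij, hjk, he, hf, h₁, h₂, h₃⟩, -⟩ := hR
  have ne : (i, j) ≠ (j, k) := fun h => hij.ne (congrArg Prod.fst h)
  exact ⟨(i, j), (j, k), (i, k), ⟨he, hf, ne, hij.trans hjk, (ev_add_ev i j k).symm⟩, h₁, h₂, h₃⟩

theorem Valid.dilate_rootPoly_root {R : SRTree n} (hR : R.Valid) (hE : IsGraph R.root) (t : ℕ) :
    dilate t (RootPoly R.root) = truncatedCone R.root t := by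
  refine (dilate_rootPoly_subset_truncatedCone _ t).antisymm ?_
  induction R with
  | leaf E => exact Alternating.truncatedCone_subset_dilate_rootPoly hR hE t
  | node E R₁ R₂ R₃ ih₁ ih₂ _ =>
    obtain ⟨e, f, g, r, h₁, h₂, -⟩ := hR.exists_isReduction
    obtain ⟨-, hR₁, hR₂, -⟩ := hR
    rw [h₁] at ih₁
    rw [h₂] at ih₂
    rw [root, r.truncatedCone_eq_union]
    exact Set.union_subset
      ((ih₁ hR₁ (r.isGraph hE)).trans (Set.image_mono (rootPoly_mono r.cone_subset)))
      ((ih₂ hR₂ (r.symm.isGraph hE)).trans (Set.image_mono (rootPoly_mono r.symm.cone_subset)))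

/-- The bound `N` is left free because the roots of the three subtrees differ in size. -/
theorem Valid.ncard_latticePoints_root {R : SRTree n} (hR : R.Valid) (hE : IsGraph R.root)
    (hU : Unimodular R.root) (t : ℕ) {N : ℕ} (hN : #R.root ≤ N) :
    ((latticePoints R.root t).ncard : ℤ) =
      ∑ m ∈ range (N + 1), (-1 : ℤ) ^ (#R.root + m) * R.leafCount m * (t + m).choose m := by
  induction R with
  | leaf E =>
    have hmem : #E ∈ range (N + 1) := mem_range_succ_iff.2 hN
    simp only [root] at hE hU ⊢
    simp [leafCount, hmem, ← two_mul, Alternating.ncard_latticePoints hR hE hU]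
  | node E R₁ R₂ R₃ ih₁ ih₂ ih₃ =>
    obtain ⟨e, f, g, r, h₁, h₂, h₃⟩ := hR.exists_isReduction
    obtain ⟨-, hR₁, hR₂, hR₃⟩ := hR
    simp only [root] at hE hU hN ⊢
    have hsub := insert_erase_erase_subset E e f g
    have hcard₁ := r.card_insert_erase hU
    have hcard₂ := r.symm.card_insert_erase hU
    have hcard₃ := r.card_insert_erase_erase hU
    rw [h₁] at ih₁
    rw [h₂] at ih₂
    rw [h₃] at ih₃
    have count₁ := ih₁ hR₁ (r.isGraph hE) (r.unimodular hU) (hcard₁.trans_le hN)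
    have count₂ := ih₂ hR₂ (r.symm.isGraph hE) (r.symm.unimodular hU) (hcard₂.trans_le hN)
    have count₃ := ih₃ hR₃ (fun h hh => r.isGraph hE h (hsub hh))
      ((r.unimodular hU).mono hsub) (by lia)
    have inclusion_exclusion := r.ncard_latticePoints hU t
    zify at inclusion_exclusion
    rw [eq_sub_of_add_eq inclusion_exclusion, count₁, count₂, count₃, hcard₁, hcard₂, ← hcard₃,
      ← sum_add_distrib, ← sum_sub_distrib]
    refine sum_congr rfl fun m _ => ?_
    simp only [leafCount]
    push_cast
    ring

end SRTree

/- STATEMENT 10 -/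
theorem stmt10 {n : ℕ} (hn : 1 ≤ n) (F : EdgeSet n) (hF : IsForest F) (l : ℕ)
    (hl : F.card = l) (R : SRTree n) (hR : R.Valid) (hr : R.root = F) :
    Filter.Tendsto (fun t : ℕ => (latticeCount (RootPoly F) t : ℝ) / (t : ℝ) ^ l)
      Filter.atTop (nhds ((R.leafCount l : ℝ) / (Nat.factorial l : ℝ))) := by
  subst hr hl
  have ehrhart : ∀ t : ℕ, (latticeCount (RootPoly R.root) t : ℝ) =
      ∑ m ∈ range (#R.root + 1), (-1 : ℝ) ^ (#R.root + m) * R.leafCount m *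
        (t + m).choose m := by
    intro t
    rw [latticeCount, hR.dilate_rootPoly_root hF.1]
    exact_mod_cast hR.ncard_latticePoints_root hF.1 hF.unimodular t le_rfl
  simp only [ehrhart]
  simpa [← two_mul] using
    tendsto_sum_mul_add_choose_div_pow (fun m => (-1) ^ (#R.root + m) * R.leafCount m) #R.root

end RPaper
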